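/- arXiv:1406.0990 — 5 statements merged into one kernel-verified Lean document; each statement's English description precedes it below -/
import Mathlib

section
/- Let λ₁ ≤ λ₂ ≤ λ₃ be real numbers satisfying λ₁ + λ₂ + λ₃ ≥ 0 and λ₁λ₂ + λ₁λ₃ + λ₂λ₃ ≥ 0. Then λ₁ + λ₂ ≥ 0; equivalently, λ₃ ≤ λ₁ + λ₂ + λ₃. -/
theorem stmt_0 (l1 l2 l3 : ℝ) (h12 : l1 ≤ l2) (h23 : l2 ≤ l3)
    (htr : 0 ≤ l1 + l2 + l3) (hs2 : 0 ≤ l1 * l2 + l1 * l3 + l2 * l3) :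
    0 ≤ l1 + l2 ∧ l3 ≤ l1 + l2 + l3 := by
  have key : 0 ≤ l1 + l2 := by
    by_contra! h
    -- If `s = l1 + l2 < 0`, then `l3 ≥ -s` gives
    -- `σ₂ = l1 * l2 + s * l3 ≤ l1 * l2 - s ^ 2 = -(3 * s ^ 2 + (l1 - l2) ^ 2) / 4 < 0`.
    have h1 : (l1 + l2) * (l1 + l2 + l3) ≤ 0 := mul_nonpos_of_nonpos_of_nonneg h.le htr
    have h2 : 0 < (l1 + l2) ^ 2 := sq_pos_of_neg h
    nlinarith [sq_nonneg (l1 - l2)]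
  exact ⟨key, by linarith⟩
end

section
/- Let A be a real symmetric 3×3 matrix with trace(A) ≥ 0 and σ₂(A) ≥ 0, where σ₂(A) := ((trace A)² − trace(A·A))/2 is the second elementary symmetric function of the eigenvalues of A. Then the matrix trace(A)·I − A is positive semidefinite, i.e. A ≤ trace(A)·I as quadratic forms. -/
/-!
The argument compares the quadratic form of `A` with its Frobenius norm. Since `A` is symmetric,
`tr (A * A) = ∑ i j, A i j ^ 2`, and Cauchy–Schwarz applied to the families `A i j` and `x i * x j`
gives `(xᵀ A x)² ≤ tr (A * A) * (xᵀ x)²`. The hypothesis on the second symmetric function is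
`tr (A * A) ≤ (tr A)²`, hence `(xᵀ A x)² ≤ (tr A * xᵀ x)²`; as `tr A` is nonnegative, taking square
roots yields `xᵀ A x ≤ tr A * xᵀ x`. The dimension plays no role.
-/

open Matrix in
/-- The quadratic form of a symmetric matrix is bounded by its Frobenius norm, in squared form. -/
lemma sq_quadForm_le_trace_mul_self {n : Type*} [Fintype n] (A : Matrix n n ℝ)
    (hA : A.IsSymm) (x : n → ℝ) :
    (x ⬝ᵥ A *ᵥ x) ^ 2 ≤ (A * A).trace * (x ⬝ᵥ x) ^ 2 := by
  have hcs := Finset.sum_mul_sq_le_sq_mul_sq (Finset.univ : Finset (n × n))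
    (fun p ↦ A p.1 p.2) (fun p ↦ x p.1 * x p.2)
  have hform : x ⬝ᵥ A *ᵥ x = ∑ p : n × n, A p.1 p.2 * (x p.1 * x p.2) := by
    simp only [dotProduct, mulVec, Finset.mul_sum, Fintype.sum_prod_type]
    exact Finset.sum_congr rfl fun i _ ↦ Finset.sum_congr rfl fun j _ ↦ by ring
  have htrace : (A * A).trace = ∑ p : n × n, A p.1 p.2 ^ 2 := by
    simp only [trace, diag_apply, mul_apply, Fintype.sum_prod_type]
    exact Finset.sum_congr rfl fun i _ ↦ Finset.sum_congr rfl fun j _ ↦ by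
      rw [hA.apply i j, sq]
  have hnorm : (x ⬝ᵥ x) ^ 2 = ∑ p : n × n, (x p.1 * x p.2) ^ 2 := by
    simp only [dotProduct, sq, Finset.sum_mul_sum, Fintype.sum_prod_type]
    exact Finset.sum_congr rfl fun i _ ↦ Finset.sum_congr rfl fun j _ ↦ by ring
  rwa [hform, htrace, hnorm]

theorem stmt_1 (A : Matrix (Fin 3) (Fin 3) ℝ) (hA : A.IsSymm)
    (htr : 0 ≤ A.trace)
    (hs2 : 0 ≤ ((A.trace)^2 - (A * A).trace) / 2) :
    (A.trace • (1 : Matrix (Fin 3) (Fin 3) ℝ) - A).PosSemidef := by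
  rw [Matrix.posSemidef_iff_dotProduct_mulVec]
  refine ⟨?_, fun x ↦ ?_⟩
  · rw [Matrix.IsHermitian, Matrix.conjTranspose_eq_transpose_of_trivial]
    simp [hA.eq]
  · have hx : 0 ≤ x ⬝ᵥ x := Finset.sum_nonneg fun i _ ↦ mul_self_nonneg (x i)
    have hsq : (x ⬝ᵥ A.mulVec x) ^ 2 ≤ (A.trace * (x ⬝ᵥ x)) ^ 2 := by
      rw [mul_pow]
      refine (sq_quadForm_le_trace_mul_self A hA x).trans ?_
      gcongr
      linarith
    have hle := le_of_abs_le (abs_le_of_sq_le_sq hsq (mul_nonneg htr hx))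
    simpa [Matrix.sub_mulVec, Matrix.smul_mulVec, dotProduct_sub] using hle
end

section
/- Let a, b, c be real numbers with a + b + c = 0. Then a³ + b³ + c³ ≥ −(1/√6)·(a² + b² + c²)^{3/2}. -/
/-!
Both sides are compared after squaring: it suffices that `(a³ + b³ + c³)² ≤ (a² + b² + c²)³ / 6`.
When `a + b + c = 0`, three times the difference of the two sides is the discriminant
`((a - b) (b - c) (a - c))²` of the cubic with roots `a`, `b`, `c`, hence nonnegative.
-/

theorem stmt_2 (a b c : ℝ) (h : a + b + c = 0) :
    a^3 + b^3 + c^3 ≥ -(1 / Real.sqrt 6) * (a^2 + b^2 + c^2) ^ ((3 : ℝ) / 2) := by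
  have hS : 0 ≤ a^2 + b^2 + c^2 := by positivity
  have key : (a^3 + b^3 + c^3)^2 ≤ (a^2 + b^2 + c^2)^3 / 6 := by
    obtain rfl : c = -a - b := by linarith
    -- Here `b - c = a + 2 * b` and `a - c = 2 * a + b`.
    linear_combination sq_nonneg ((a - b) * (a + 2 * b) * (2 * a + b)) / 3
  have hpow : ((a^2 + b^2 + c^2) ^ ((3 : ℝ) / 2))^2 = (a^2 + b^2 + c^2)^3 := by
    rw [← Real.rpow_mul_natCast hS, ← Real.rpow_natCast]
    norm_num
  have hsq : (1 / Real.sqrt 6 * (a^2 + b^2 + c^2) ^ ((3 : ℝ) / 2))^2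
      = (a^2 + b^2 + c^2)^3 / 6 := by
    rw [mul_pow, hpow, div_pow, Real.sq_sqrt (by norm_num)]
    ring
  rw [ge_iff_le, neg_mul]
  exact (abs_le_of_sq_le_sq' (key.trans_eq hsq.symm) (by positivity)).1
end

section
/- Let E be a real symmetric 3×3 matrix with trace(E) = 0. Then trace(E·E·E) ≥ −(1/√6)·(trace(E·E))^{3/2}. -/
/-!
By the spectral theorem, `tr (E ^ k)` is the `k`-th power sum of the three real eigenvalues
`a, b, c` of `E`. When `a + b + c = 0`, the polynomial
`(a² + b² + c²)³ - 6 (a³ + b³ + c³)²` is twice the discriminant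
`((a - b)(b - c)(c - a))²`, hence nonnegative. So `6 (tr E³)² ≤ (tr E²)³`, and taking square
roots bounds `|tr E³|`.
-/

/-- The trace of a power of a real symmetric matrix is a power sum of its eigenvalues. -/
lemma trace_pow_eq_sum_eigenvalues {n : Type*} [Fintype n] [DecidableEq n]
    {A : Matrix n n ℝ} (hA : A.IsHermitian) (k : ℕ) :
    (A ^ k).trace = ∑ i, hA.eigenvalues i ^ k := by
  conv_lhs => rw [hA.spectral_theorem]
  rw [← map_pow, Unitary.conjStarAlgAut_apply, Matrix.trace_mul_cycle]
  simp [Matrix.diagonal_pow, Matrix.trace_diagonal]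

lemma six_mul_sum_cube_sq_le {a b c : ℝ} (h : a + b + c = 0) :
    6 * (a ^ 3 + b ^ 3 + c ^ 3) ^ 2 ≤ (a ^ 2 + b ^ 2 + c ^ 2) ^ 3 := by
  obtain rfl : c = -a - b := by linarith
  nlinarith [sq_nonneg ((a - b) * (b - (-a - b)) * ((-a - b) - a))]

theorem stmt_3 (E : Matrix (Fin 3) (Fin 3) ℝ) (hE : E.IsSymm)
    (htr : E.trace = 0) :
    (E * E * E).trace ≥ -(1 / Real.sqrt 6) * ((E * E).trace) ^ ((3 : ℝ) / 2) := by
  have hH : E.IsHermitian := by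
    rwa [Matrix.IsHermitian, Matrix.conjTranspose_eq_transpose_of_trivial]
  have h1 := trace_pow_eq_sum_eigenvalues hH 1
  have h2 := trace_pow_eq_sum_eigenvalues hH 2
  have h3 := trace_pow_eq_sum_eigenvalues hH 3
  simp only [pow_one, htr, Fin.sum_univ_three] at h1 h2 h3
  have key := six_mul_sum_cube_sq_le h1.symm
  have hp : 0 ≤ (E ^ 2).trace := by rw [h2]; positivity
  rw [← h2, ← h3] at key
  rw [← pow_two, ← pow_succ]
  have hr : (E ^ 2).trace ^ ((3 : ℝ) / 2) = Real.sqrt ((E ^ 2).trace ^ 3) := by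
    rw [Real.sqrt_eq_rpow, ← Real.rpow_natCast, ← Real.rpow_mul hp]
    norm_num
  rw [hr, neg_mul, one_div_mul_eq_div, ← Real.sqrt_div' _ (by norm_num)]
  exact Real.neg_sqrt_le_of_sq_le (by linarith)
end

section
/- Let S be a real symmetric 3×3 matrix, set R := trace(S) and E := S − (R/3)·I, and define Rm : Fin 3 → Fin 3 → Fin 3 → Fin 3 → ℝ by Rm i k j l := E i j·δ k l − E i l·δ j k + E k l·δ i j − E k j·δ i l + (R/6)·(δ i j·δ k l − δ i l·δ j k), where δ is the Kronecker delta. If the matrix (R/2)·I − S is positive semidefinite, then for all vectors X, Y ∈ ℝ³ one has ∑_{i,k,j,l} Rm i k j l · X i · Y k · X j · Y l ≥ 0. -/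
/-!
In dimension three a plane is determined by its normal. With `N = X × Y`, every symmetric `A`
satisfies `A(X,X)|Y|² - 2 A(X,Y)⟨X,Y⟩ + A(Y,Y)|X|² = tr(A)|N|² - A(N,N)`. Applying this to the
trace-free matrix `E` and using `|X|²|Y|² - ⟨X,Y⟩² = |N|²` turns the curvature expression into
`(R/2)|N|² - S(N,N)`, which is the quadratic form of `(R/2) • 1 - S` evaluated at `N`.
-/


theorem stmt_7 (S : Matrix (Fin 3) (Fin 3) ℝ) (hS : S.IsSymm)
    (R : ℝ) (hR : R = S.trace)
    (E : Matrix (Fin 3) (Fin 3) ℝ)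
    (hE : E = S - (R / 3) • (1 : Matrix (Fin 3) (Fin 3) ℝ))
    (Rm : Fin 3 → Fin 3 → Fin 3 → Fin 3 → ℝ)
    (hRm : ∀ i k j l, Rm i k j l =
      E i j * (if k = l then (1 : ℝ) else 0) - E i l * (if j = k then (1 : ℝ) else 0)
        + E k l * (if i = j then (1 : ℝ) else 0) - E k j * (if i = l then (1 : ℝ) else 0)
        + (R / 6) * ((if i = j then (1 : ℝ) else 0) * (if k = l then (1 : ℝ) else 0)
            - (if i = l then (1 : ℝ) else 0) * (if j = k then (1 : ℝ) else 0)))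
    (hpsd : ((R / 2) • (1 : Matrix (Fin 3) (Fin 3) ℝ) - S).PosSemidef) :
    ∀ X Y : Fin 3 → ℝ,
      0 ≤ ∑ i, ∑ k, ∑ j, ∑ l, Rm i k j l * X i * Y k * X j * Y l := by
  intro X Y
  have h := hpsd.dotProduct_mulVec_nonneg (crossProduct X Y)
  have h10 : S 1 0 = S 0 1 := hS.apply 0 1
  have h20 : S 2 0 = S 0 2 := hS.apply 0 2
  have h21 : S 2 1 = S 1 2 := hS.apply 1 2
  rw [Matrix.trace_fin_three] at hR
  -- The two sides agree as polynomials in the entries of `S`, `X` and `Y`.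
  refine h.trans_eq ?_
  simp [hRm, hE, Fin.sum_univ_three, cross_apply, Matrix.mulVec, dotProduct, Matrix.one_apply,
    h10, h20, h21]
  rw [hR]
  ring
end
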